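/- arXiv:2102.03871 — 2 statements merged into one kernel-verified Lean document; each statement's English description precedes it below -/
import Mathlib

section
/- Let M be a quasianalytic intersectable weight sequence. Then m_k^{1/k} → ∞ as k → ∞, and consequently for every N ∈ L(M) one has n_k^{1/k} → ∞ as k → ∞, where n_k := N_k/k!. -/
open Filter Set Asymptotics MeasureTheory

noncomputable section

/-- `M` is a weight sequence: `M 0 = 1`, positive, `M 1 ≥ 1`, log-convex and
`M k ^ (1/k) → ∞`. -/
def IsWeightSeq (M : ℕ → ℝ) : Prop :=
  M 0 = 1 ∧ (∀ k, 0 < M k) ∧ 1 ≤ M 1 ∧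
    (∀ k : ℕ, 1 ≤ k → M k ^ 2 ≤ M (k - 1) * M (k + 1)) ∧
    Tendsto (fun k : ℕ => M k ^ (1 / (k : ℝ))) atTop atTop

/-- The sequence `m k = M k / k!`. -/
def mseq (M : ℕ → ℝ) : ℕ → ℝ := fun k => M k / (Nat.factorial k : ℝ)

/-- Log-convexity of a sequence. -/
def LogConvexSeq (m : ℕ → ℝ) : Prop := ∀ k : ℕ, 1 ≤ k → m k ^ 2 ≤ m (k - 1) * m (k + 1)

/-- `m k ^ (1/k) → ∞`. -/
def RootTendsToInfty (m : ℕ → ℝ) : Prop :=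
  Tendsto (fun k : ℕ => m k ^ (1 / (k : ℝ))) atTop atTop

/-- Moderate growth of a sequence. -/
def ModerateGrowth (M : ℕ → ℝ) : Prop :=
  ∃ C : ℝ, 0 < C ∧ ∀ j k : ℕ, M (j + k) ≤ C ^ (j + k) * M j * M k

/-- Derivation closedness of a sequence. -/
def DerivClosed (M : ℕ → ℝ) : Prop :=
  ∃ C : ℝ, 0 < C ∧ ∀ k : ℕ, M (k + 1) ≤ C ^ (k + 1) * M k

/-- Non-quasianalyticity: `∑_{k≥1} M (k-1) / M k = ∑_{k≥1} 1/μ_k < ∞`. -/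
def NonQuasianalytic (M : ℕ → ℝ) : Prop := Summable fun k : ℕ => M k / M (k + 1)

/-- Quasianalyticity: `∑_{k≥1} 1/μ_k = ∞`. -/
def Quasianalytic (M : ℕ → ℝ) : Prop := ¬ NonQuasianalytic M

/-- The associated function `h_m (t) = inf_k m k * t ^ k`. -/
def hFun (m : ℕ → ℝ) (t : ℝ) : ℝ := ⨅ k : ℕ, m k * t ^ k

/-- `Γ̄_m (t) = min {k | h_m t = m k * t ^ k}`. -/
def GammaBar (m : ℕ → ℝ) (t : ℝ) : ℕ := sInf {k : ℕ | hFun m t = m k * t ^ k}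

/-- `Γ̲_m (t) = min {k | m (k+1) / m k ≥ 1 / t}`. -/
def GammaLow (m : ℕ → ℝ) (t : ℝ) : ℕ := sInf {k : ℕ | 1 / t ≤ m (k + 1) / m k}

/-- The set whose supremum is `mg (M, N)`. -/
def mgSet (M N : ℕ → ℝ) : Set ℝ :=
  {x | ∃ j k : ℕ, 1 ≤ j + k ∧ x = (M (j + k) / (N j * N k)) ^ (1 / (j + k : ℝ))}

/-- `mg (M, N) = sup_{j+k ≥ 1} (M (j+k) / (N j * N k)) ^ (1/(j+k))`. -/
def mg (M N : ℕ → ℝ) : ℝ := sSup (mgSet M N)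

/-- `mg (M, N) < ∞`. -/
def MgFinite (M N : ℕ → ℝ) : Prop := BddAbove (mgSet M N)

/-- A weight sequence is regular: `m k ^ (1/k) → ∞`, derivation closed, and
`Γ̄_m (C t) ≤ Γ̲_m t` for some `C ≥ 1`. -/
def RegularWS (M : ℕ → ℝ) : Prop :=
  RootTendsToInfty (mseq M) ∧ DerivClosed M ∧
    ∃ C : ℝ, 1 ≤ C ∧ ∀ t : ℝ, 0 < t → GammaBar (mseq M) (C * t) ≤ GammaLow (mseq M) t

/-- `f` is of class `E^{M}` (Roumieu) on the open set `U`. -/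
def RoumieuOn {E : Type*} [NormedAddCommGroup E] [NormedSpace ℝ E]
    (M : ℕ → ℝ) (f : E → ℂ) (U : Set E) : Prop :=
  ContDiffOn ℝ (⊤ : ℕ∞) f U ∧
    ∀ V : Set E, IsOpen V → IsCompact (closure V) → closure V ⊆ U →
      ∃ C σ : ℝ, 0 < C ∧ 0 < σ ∧
        ∀ x ∈ V, ∀ k : ℕ, ‖iteratedFDerivWithin ℝ k f U x‖ ≤ C * σ ^ k * M k

/-- `f` is of class `E^{(M)}` (Beurling) on the open set `U`. -/
def BeurlingOn {E : Type*} [NormedAddCommGroup E] [NormedSpace ℝ E]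
    (M : ℕ → ℝ) (f : E → ℂ) (U : Set E) : Prop :=
  ContDiffOn ℝ (⊤ : ℕ∞) f U ∧
    ∀ V : Set E, IsOpen V → IsCompact (closure V) → closure V ⊆ U →
      ∀ σ : ℝ, 0 < σ → ∃ C : ℝ, 0 < C ∧
        ∀ x ∈ V, ∀ k : ℕ, ‖iteratedFDerivWithin ℝ k f U x‖ ≤ C * σ ^ k * M k

/-- A weight matrix: a nonempty, pointwise totally ordered family of weight sequences. -/
def IsWeightMatrix (W : Set (ℕ → ℝ)) : Prop :=
  W.Nonempty ∧ (∀ M ∈ W, IsWeightSeq M) ∧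
    ∀ M ∈ W, ∀ N ∈ W, (∀ k, M k ≤ N k) ∨ (∀ k, N k ≤ M k)

/-- R-regularity of a weight matrix. -/
def RRegular (W : Set (ℕ → ℝ)) : Prop :=
  (∀ M ∈ W, RootTendsToInfty (mseq M)) ∧
    (∀ M ∈ W, ∃ N ∈ W, ∃ C : ℝ, 1 ≤ C ∧ ∀ j : ℕ, M (j + 1) ≤ C ^ (j + 1) * N j) ∧
    (∀ M ∈ W, ∃ N ∈ W, ∃ C : ℝ, 1 ≤ C ∧
      ∀ t : ℝ, 0 < t → GammaBar (mseq N) (C * t) ≤ GammaLow (mseq M) t)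

/-- B-regularity of a weight matrix. -/
def BRegular (W : Set (ℕ → ℝ)) : Prop :=
  (∀ M ∈ W, RootTendsToInfty (mseq M)) ∧
    (∀ M ∈ W, ∃ N ∈ W, ∃ C : ℝ, 1 ≤ C ∧ ∀ j : ℕ, N (j + 1) ≤ C ^ j * M j) ∧
    (∀ M ∈ W, ∃ N ∈ W, ∃ C : ℝ, 1 ≤ C ∧
      ∀ t : ℝ, 0 < t → GammaBar (mseq M) (C * t) ≤ GammaLow (mseq N) t)

/-- R-moderate growth of a weight matrix. -/
def RModerateGrowth (W : Set (ℕ → ℝ)) : Prop := ∀ M ∈ W, ∃ N ∈ W, MgFinite M N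

/-- B-moderate growth of a weight matrix. -/
def BModerateGrowth (W : Set (ℕ → ℝ)) : Prop := ∀ M ∈ W, ∃ N ∈ W, MgFinite N M

/-- `f` is of class `E^{W}` (Roumieu, weight matrix) on the open set `U`. -/
def MatrixRoumieuOn {E : Type*} [NormedAddCommGroup E] [NormedSpace ℝ E]
    (W : Set (ℕ → ℝ)) (f : E → ℂ) (U : Set E) : Prop :=
  ContDiffOn ℝ (⊤ : ℕ∞) f U ∧
    ∀ V : Set E, IsOpen V → IsCompact (closure V) → closure V ⊆ U →
      ∃ M ∈ W, ∃ C σ : ℝ, 0 < C ∧ 0 < σ ∧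
        ∀ x ∈ V, ∀ k : ℕ, ‖iteratedFDerivWithin ℝ k f U x‖ ≤ C * σ ^ k * M k

/-- `f` is of class `E^{(W)}` (Beurling, weight matrix) on the open set `U`. -/
def MatrixBeurlingOn {E : Type*} [NormedAddCommGroup E] [NormedSpace ℝ E]
    (W : Set (ℕ → ℝ)) (f : E → ℂ) (U : Set E) : Prop :=
  ContDiffOn ℝ (⊤ : ℕ∞) f U ∧
    ∀ V : Set E, IsOpen V → IsCompact (closure V) → closure V ⊆ U →
      ∀ M ∈ W, ∀ σ : ℝ, 0 < σ → ∃ C : ℝ, 0 < C ∧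
        ∀ x ∈ V, ∀ k : ℕ, ‖iteratedFDerivWithin ℝ k f U x‖ ≤ C * σ ^ k * M k

/-- `ω` is a weight function. -/
def IsWeightFunction (ω : ℝ → ℝ) : Prop :=
  ContinuousOn ω (Ici 0) ∧ MonotoneOn ω (Ici 0) ∧ (∀ t ∈ Ici (0 : ℝ), 0 ≤ ω t) ∧
    ((fun t => ω (2 * t)) =O[atTop] ω) ∧ (ω =o[atTop] fun t : ℝ => t) ∧
    ((fun t => Real.log t) =o[atTop] ω) ∧ ConvexOn ℝ (Ici 0) fun t => ω (Real.exp t)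

/-- The Young conjugate `φ*_ω (s) = sup_{t ≥ 0} (s t - ω (e^t))`. -/
def phiStar (ω : ℝ → ℝ) (s : ℝ) : ℝ := sSup ((fun t => s * t - ω (Real.exp t)) '' Ici 0)

/-- Non-quasianalyticity of a weight function. -/
def NonQuasianalyticW (ω : ℝ → ℝ) : Prop := IntegrableOn (fun t => ω t / t ^ 2) (Ici 1)

/-- `f` is of class `E^{ω}` (Roumieu) on the open set `U`. -/
def OmegaRoumieuOn {E : Type*} [NormedAddCommGroup E] [NormedSpace ℝ E]
    (ω : ℝ → ℝ) (f : E → ℂ) (U : Set E) : Prop :=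
  ContDiffOn ℝ (⊤ : ℕ∞) f U ∧
    ∀ V : Set E, IsOpen V → IsCompact (closure V) → closure V ⊆ U →
      ∃ C ρ : ℝ, 0 < C ∧ 0 < ρ ∧
        ∀ x ∈ V, ∀ k : ℕ,
          ‖iteratedFDerivWithin ℝ k f U x‖ ≤ C * Real.exp (phiStar ω (ρ * k) / ρ)

/-- `f` is of class `E^{(ω)}` (Beurling) on the open set `U`. -/
def OmegaBeurlingOn {E : Type*} [NormedAddCommGroup E] [NormedSpace ℝ E]
    (ω : ℝ → ℝ) (f : E → ℂ) (U : Set E) : Prop :=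
  ContDiffOn ℝ (⊤ : ℕ∞) f U ∧
    ∀ V : Set E, IsOpen V → IsCompact (closure V) → closure V ⊆ U →
      ∀ ρ : ℝ, 0 < ρ → ∃ C : ℝ, 0 < C ∧
        ∀ x ∈ V, ∀ k : ℕ,
          ‖iteratedFDerivWithin ℝ k f U x‖ ≤ C * Real.exp (phiStar ω (ρ * k) / ρ)

/-- The open ellipse `Ω_ε` with vertices `± cosh ε` and co-vertices `± i sinh ε`. -/
def OmegaE (ε : ℝ) : Set ℂ :=
  {z : ℂ | (z.re / Real.cosh ε) ^ 2 + (z.im / Real.sinh ε) ^ 2 < 1}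

/-- The sequence space `Λ^{M}`. -/
def Lambda (M : ℕ → ℝ) : Set (ℕ → ℂ) :=
  {c | ∃ ρ : ℝ, 0 < ρ ∧ ∃ C : ℝ, ∀ k, ‖c k‖ ≤ C * ρ ^ k * M k}

/-- `L(M)`: all non-quasianalytic weight sequences `N ≥ M` with `n = N/k!` log-convex. -/
def LM (M : ℕ → ℝ) : Set (ℕ → ℝ) :=
  {N | IsWeightSeq N ∧ NonQuasianalytic N ∧ (∀ k, M k ≤ N k) ∧ LogConvexSeq (mseq N)}

/-- A quasianalytic weight sequence `M` is intersectable if `Λ^{M} = ⋂_{N ∈ L(M)} Λ^{N}`. -/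
def Intersectable (M : ℕ → ℝ) : Prop := Lambda M = ⋂ N ∈ LM M, Lambda N


/-- Partial harmonic sums. -/
def hsum (n : ℕ) : ℝ := ∑ i ∈ Finset.range (n + 1), 1 / ((i : ℝ) + 1)

lemma hsum_pos (n : ℕ) : 0 < hsum n := by
  unfold hsum
  exact Finset.sum_pos (fun i _ => by positivity) ⟨0, by simp⟩

/-- Products of harmonic sums. -/
def hprod (k : ℕ) : ℝ := ∏ j ∈ Finset.range k, hsum j

lemma hprod_pos (k : ℕ) : 0 < hprod k := Finset.prod_pos fun j _ => hsum_pos j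

lemma hsum_tendsto : Tendsto hsum atTop atTop := by
  have h := Real.tendsto_sum_range_one_div_nat_succ_atTop
  exact h.comp (tendsto_add_atTop_nat 1)

lemma root_of_hprod_le (a : ℕ → ℝ) (C ρ : ℝ) (hρ : 0 < ρ) (ha0 : 0 < a 0)
    (h : ∀ k, hprod k ≤ C * ρ ^ k * a k) : RootTendsToInfty a := by
  have hC : 0 < C := by
    have h0 := (hprod_pos 0).trans_le (h 0)
    rw [pow_zero, mul_one] at h0
    exact pos_of_mul_pos_left h0 ha0.le
  unfold RootTendsToInfty
  rw [tendsto_atTop]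
  intro B0
  set B := max B0 1 with hB
  have hB1 : 1 ≤ B := le_max_right _ _
  have hBpos : 0 < B := by linarith
  set L := 2 * ρ * B with hL
  have hLpos : 0 < L := by positivity
  obtain ⟨K, hK⟩ := eventually_atTop.1 (hsum_tendsto.eventually_ge_atTop L)
  have hP : ∀ j, hprod K * L ^ j ≤ hprod (K + j) := by
    intro j
    induction j with
    | zero => simp
    | succ j ih =>
      have e : hprod (K + (j + 1)) = hprod (K + j) * hsum (K + j) := by
        unfold hprod
        rw [← add_assoc, Finset.prod_range_succ]
      rw [e, pow_succ, ← mul_assoc]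
      exact mul_le_mul ih (hK _ (by omega)) hLpos.le (hprod_pos _).le
  set D := hprod K / L ^ K with hD
  have hDpos : 0 < D := div_pos (hprod_pos K) (by positivity)
  have h2 : Tendsto (fun k : ℕ => (2 : ℝ) ^ k) atTop atTop :=
    tendsto_pow_atTop_atTop_of_one_lt (by norm_num)
  filter_upwards [h2.eventually_ge_atTop (|C| / D), eventually_ge_atTop K,
    eventually_ge_atTop 1] with k hk1 hk2 hk3
  obtain ⟨j, rfl⟩ := Nat.exists_eq_add_of_le hk2
  have h3 : D * L ^ (K + j) ≤ hprod (K + j) := by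
    refine le_trans (le_of_eq ?_) (hP j)
    rw [hD, pow_add]
    field_simp
  have h4 := h3.trans (h (K + j))
  have h5 : |C| ≤ 2 ^ (K + j) * D := (div_le_iff₀ hDpos).1 hk1
  have h6 : D * L ^ (K + j) = (2 ^ (K + j) * D) * ρ ^ (K + j) * B ^ (K + j) := by
    rw [hL, mul_pow, mul_pow]
    ring
  rw [h6] at h4
  have ha : B ^ (K + j) ≤ a (K + j) := by
    have hρk : 0 < ρ ^ (K + j) := by positivity
    have hBk : 0 < B ^ (K + j) := by positivity
    have hEpos : 0 < 2 ^ (K + j) * D := by positivity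
    have h7 : C * ρ ^ (K + j) * B ^ (K + j) ≤ C * ρ ^ (K + j) * a (K + j) := by
      refine le_trans ?_ h4
      have := (le_abs_self C).trans h5
      gcongr
    exact le_of_mul_le_mul_left h7 (by positivity)
  calc B0 ≤ B := le_max_left _ _
    _ = (B ^ (K + j)) ^ (1 / ((K + j : ℕ) : ℝ)) := by
        rw [one_div, Real.pow_rpow_inv_natCast hBpos.le (by omega)]
    _ ≤ a (K + j) ^ (1 / ((K + j : ℕ) : ℝ)) :=
        Real.rpow_le_rpow (by positivity) ha (by positivity)

lemma hprod_le (N : ℕ → ℝ) (hN : IsWeightSeq N) (hq : NonQuasianalytic N)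
    (hlc : LogConvexSeq (mseq N)) :
    ∃ S : ℝ, 0 < S ∧ ∀ k, hprod k ≤ S ^ k * mseq N k := by
  obtain ⟨h0, hpos, -, -, -⟩ := hN
  have npos : ∀ k, 0 < mseq N k := fun k => div_pos (hpos k) (by positivity)
  set r : ℕ → ℝ := fun j => mseq N (j + 1) / mseq N j with hr
  have rpos : ∀ j, 0 < r j := fun j => div_pos (npos _) (npos _)
  have rmono : Monotone r := by
    refine monotone_nat_of_le_succ fun j => ?_
    have := hlc (j + 1) (by omega)
    simp only [hr]
    rw [div_le_div_iff₀ (npos _) (npos _)]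
    simpa [sq, mul_comm] using this
  have term : ∀ i, N i / N (i + 1) = 1 / (((i : ℝ) + 1) * r i) := by
    intro i
    have := (hpos i).ne'
    have := (hpos (i + 1)).ne'
    have := (Nat.factorial_pos i).ne'
    simp only [hr, mseq, Nat.factorial_succ]
    push_cast
    field_simp
  set S := ∑' k, N k / N (k + 1) with hS
  have tpos : ∀ k, 0 < N k / N (k + 1) := fun k => div_pos (hpos _) (hpos _)
  have Spos : 0 < S := hq.tsum_pos (fun k => (tpos k).le) 0 (tpos 0)
  refine ⟨S, Spos, ?_⟩
  have key : ∀ j, hsum j ≤ S * r j := by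
    intro j
    calc hsum j ≤ ∑ i ∈ Finset.range (j + 1), (N i / N (i + 1)) * r j := by
          unfold hsum
          refine Finset.sum_le_sum fun i hi => ?_
          have hij : i ≤ j := by simpa [Nat.lt_succ_iff] using hi
          have h1 := rmono hij
          have h2 := rpos i
          rw [term, div_mul_eq_mul_div, one_mul, div_le_div_iff₀ (by positivity) (by positivity)]
          have : (0 : ℝ) < (i : ℝ) + 1 := by positivity
          nlinarith
      _ = (∑ i ∈ Finset.range (j + 1), N i / N (i + 1)) * r j := by rw [Finset.sum_mul]
      _ ≤ S * r j := mul_le_mul_of_nonneg_right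
          (hq.sum_le_tsum _ fun i _ => (tpos i).le) (rpos j).le
  intro k
  induction k with
  | zero => simp [hprod, mseq, h0]
  | succ k ih =>
    have e : hprod (k + 1) = hprod k * hsum k := by
      unfold hprod
      rw [Finset.prod_range_succ]
    have e2 : S ^ (k + 1) * mseq N (k + 1) = (S ^ k * mseq N k) * (S * r k) := by
      have := (npos k).ne'
      simp only [hr]
      field_simp
      ring
    rw [e, e2]
    exact mul_le_mul ih (key k) (hsum_pos k).le
      (mul_pos (pow_pos Spos _) (npos k)).le

/-- a quasianalytic intersectable weight sequence `M` satisfies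
`m_k^{1/k} → ∞`, and every `N ∈ L(M)` satisfies `n_k^{1/k} → ∞`. -/
theorem statement18 (M : ℕ → ℝ) (hM : IsWeightSeq M) (hq : Quasianalytic M)
    (hint : Intersectable M) :
    RootTendsToInfty (mseq M) ∧ ∀ N ∈ LM M, RootTendsToInfty (mseq N) := by
  have h2 : ∀ N ∈ LM M, RootTendsToInfty (mseq N) := by
    rintro N ⟨hN, hNq, -, hlc⟩
    obtain ⟨S, hS, hb⟩ := hprod_le N hN hNq hlc
    refine root_of_hprod_le _ 1 S hS ?_ fun k => by simpa using hb k
    simp [mseq, hN.1]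
  refine ⟨?_, h2⟩
  have hc : (fun k : ℕ => (((k.factorial : ℝ) * hprod k : ℝ) : ℂ)) ∈ Lambda M := by
    rw [hint]
    refine Set.mem_iInter₂.2 ?_
    rintro N ⟨hN, hNq, -, hlc⟩
    obtain ⟨S, hS, hb⟩ := hprod_le N hN hNq hlc
    refine ⟨S, hS, 1, fun k => ?_⟩
    have hf : (0 : ℝ) < k.factorial := by positivity
    rw [Complex.norm_real, Real.norm_of_nonneg (mul_pos hf (hprod_pos k)).le]
    calc (k.factorial : ℝ) * hprod k ≤ k.factorial * (S ^ k * mseq N k) := by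
          gcongr
          exact hb k
      _ = 1 * S ^ k * N k := by
          unfold mseq
          field_simp
  obtain ⟨ρ, hρ, C, hb⟩ := hc
  refine root_of_hprod_le _ C ρ hρ (by simp [mseq, hM.1]) fun k => ?_
  have hf : (0 : ℝ) < k.factorial := by positivity
  have := hb k
  rw [Complex.norm_real, Real.norm_of_nonneg (mul_pos hf (hprod_pos k)).le] at this
  unfold mseq
  rw [← mul_div_assoc, le_div_iff₀ hf, mul_comm]
  exact this
end
end

section
/- Let M be a quasianalytic intersectable weight sequence of moderate growth. Then for every N ∈ L(M) there exists N' ∈ L(M) such that mg(N',N) < ∞. -/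
open Filter Set Asymptotics MeasureTheory

noncomputable section

/-- Ratio monotonicity of a positive log-convex sequence, in product form. -/
lemma aux_ratio (N : ℕ → ℝ) (hp : ∀ k, 0 < N k) (hl : LogConvexSeq N) (i d : ℕ) :
    N (i + 1) * N (i + d) ≤ N i * N (i + d + 1) := by
  induction d with
  | zero => simp [mul_comm]
  | succ d ih =>
    have h := hl (i + d + 1) (by omega)
    simp only [Nat.add_sub_cancel] at h
    have h1 := hp (i + d)
    have h2 := hp (i + d + 1)
    have h3 := hp i
    rw [show i + (d + 1) = i + d + 1 by ring]
    have h5 : N (i + 1) * N (i + d) * N (i + d + 1) ^ 2 ≤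
        N i * N (i + d + 1) * (N (i + d) * N (i + d + 1 + 1)) := by
      have := hp (i + d + 1 + 1)
      have := hp (i + 1)
      exact mul_le_mul ih h (by positivity) (by positivity)
    have h6 : 0 < N (i + d) * N (i + d + 1) := by positivity
    by_contra hcon
    push Not at hcon
    nlinarith [mul_lt_mul_of_pos_left hcon h6]

lemma aux_half_le (N : ℕ → ℝ) (hp : ∀ k, 0 < N k) (hl : LogConvexSeq N) (d : ℕ) :
    ∀ j, N ((j + (j + d)) / 2) * N ((j + (j + d) + 1) / 2) ≤ N j * N (j + d) := by
  induction d using Nat.strong_induction_on with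
  | _ d ih =>
    intro j
    rcases Nat.lt_or_ge d 2 with hd | hd
    · have h1 : (j + (j + d)) / 2 = j := by omega
      have h2 : (j + (j + d) + 1) / 2 = j + d := by omega
      rw [h1, h2]
    · obtain ⟨e, rfl⟩ := Nat.exists_eq_add_of_le hd
      have h := ih e (by omega) (j + 1)
      have h2 := aux_ratio N hp hl j (e + 1)
      rw [show j + 1 + (j + 1 + e) = j + (j + (2 + e)) by ring] at h
      rw [show j + (e + 1) = j + 1 + e by ring, show j + 1 + e + 1 = j + (2 + e) by ring] at h2
      exact h.trans h2

lemma aux_half (N : ℕ → ℝ) (hp : ∀ k, 0 < N k) (hl : LogConvexSeq N) (j k : ℕ) :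
    N ((j + k) / 2) * N ((j + k + 1) / 2) ≤ N j * N k := by
  rcases le_total j k with h | h
  · obtain ⟨d, rfl⟩ := Nat.exists_eq_add_of_le h
    exact aux_half_le N hp hl d j
  · obtain ⟨d, rfl⟩ := Nat.exists_eq_add_of_le h
    rw [add_comm, mul_comm (N (k + d))]
    exact aux_half_le N hp hl d k

/-- The half-index product of `n = N / k!`, times `a ^ k`. -/
def halfSeq (N : ℕ → ℝ) (a : ℝ) : ℕ → ℝ :=
  fun k => a ^ k * (mseq N (k / 2) * mseq N ((k + 1) / 2))

/-- The sequence witnessing the theorem. -/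
def newSeq (N : ℕ → ℝ) (a : ℝ) : ℕ → ℝ := fun k => (Nat.factorial k : ℝ) * halfSeq N a k

lemma mseq_newSeq (N : ℕ → ℝ) (a : ℝ) : mseq (newSeq N a) = halfSeq N a := by
  funext k
  have : (Nat.factorial k : ℝ) ≠ 0 := by positivity
  simp only [mseq, newSeq]
  field_simp

lemma newSeq_eq (N : ℕ → ℝ) (a : ℝ) (k : ℕ) :
    newSeq N a k = a ^ k * (Nat.choose k (k / 2) : ℝ) * (N (k / 2) * N ((k + 1) / 2)) := by
  have h : k - k / 2 = (k + 1) / 2 := by omega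
  rw [Nat.cast_choose ℝ (Nat.div_le_self k 2), h]
  simp only [newSeq, halfSeq, mseq]
  have h1 : (Nat.factorial (k / 2) : ℝ) ≠ 0 := by positivity
  have h2 : (Nat.factorial ((k + 1) / 2) : ℝ) ≠ 0 := by positivity
  field_simp

lemma halfSeq_pos (N : ℕ → ℝ) (a : ℝ) (ha : 0 < a) (hp : ∀ k, 0 < N k) (k : ℕ) :
    0 < halfSeq N a k := by
  have h1 := hp (k / 2)
  have h2 := hp ((k + 1) / 2)
  simp only [halfSeq, mseq]
  positivity

lemma halfSeq_logConvex (N : ℕ → ℝ) (a : ℝ) (ha : 0 < a) (hp : ∀ k, 0 < N k)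
    (hl : LogConvexSeq (mseq N)) : LogConvexSeq (halfSeq N a) := by
  have hn : ∀ k, 0 < mseq N k := fun k => by
    have := hp k
    simp only [mseq]; positivity
  intro k hk
  obtain ⟨i, rfl⟩ := Nat.exists_eq_add_of_le' hk
  simp only [Nat.add_sub_cancel, halfSeq]
  rcases Nat.even_or_odd' i with ⟨j, rfl | rfl⟩
  · rw [show (2 * j + 1) / 2 = j by omega, show (2 * j + 1 + 1) / 2 = j + 1 by omega,
      show 2 * j / 2 = j by omega, show (2 * j + 1 + 1 + 1) / 2 = j + 1 by omega]
    apply le_of_eq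
    ring
  · rw [show (2 * j + 1) / 2 = j by omega, show (2 * j + 1 + 1) / 2 = j + 1 by omega,
      show (2 * j + 1 + 1 + 1) / 2 = j + 1 by omega,
      show (2 * j + 1 + 1 + 1 + 1) / 2 = j + 2 by omega]
    have h := hl (j + 1) (by omega)
    simp only [Nat.add_sub_cancel] at h
    have h1 : 0 ≤ a ^ (2 * (2 * j + 1 + 1)) * mseq N (j + 1) ^ 2 := by positivity
    calc _ = a ^ (2 * (2 * j + 1 + 1)) * mseq N (j + 1) ^ 2 * mseq N (j + 1) ^ 2 := by ring
      _ ≤ a ^ (2 * (2 * j + 1 + 1)) * mseq N (j + 1) ^ 2 * (mseq N j * mseq N (j + 1 + 1)) :=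
        mul_le_mul_of_nonneg_left h h1
      _ = _ := by ring

lemma newSeq_logConvex (N : ℕ → ℝ) (a : ℝ) (ha : 0 < a) (hp : ∀ k, 0 < N k)
    (hl : LogConvexSeq (mseq N)) : LogConvexSeq (newSeq N a) := by
  intro k hk
  have h := halfSeq_logConvex N a ha hp hl k hk
  obtain ⟨i, rfl⟩ := Nat.exists_eq_add_of_le' hk
  simp only [Nat.add_sub_cancel, newSeq] at h ⊢
  have h1 := halfSeq_pos N a ha hp i
  have h2 := halfSeq_pos N a ha hp (i + 1 + 1)
  have hf : ((Nat.factorial (i + 1) : ℝ)) ^ 2 ≤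
      (Nat.factorial i : ℝ) * (Nat.factorial (i + 1 + 1) : ℝ) := by
    rw [Nat.factorial_succ (i + 1), Nat.factorial_succ i]
    push_cast
    have : (0 : ℝ) < Nat.factorial i := by positivity
    have h3 : (0 : ℝ) ≤ (Nat.factorial i : ℝ) ^ 2 * (i + 1) := by positivity
    nlinarith
  calc _ = (Nat.factorial (i + 1) : ℝ) ^ 2 * halfSeq N a (i + 1) ^ 2 := by ring
    _ ≤ ((Nat.factorial i : ℝ) * (Nat.factorial (i + 1 + 1) : ℝ)) *
        (halfSeq N a i * halfSeq N a (i + 1 + 1)) :=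
      mul_le_mul hf h (by positivity) (by positivity)
    _ = _ := by ring

lemma newSeq_summable (N : ℕ → ℝ) (a : ℝ) (ha : 1 ≤ a) (hp : ∀ k, 0 < N k)
    (hs : NonQuasianalytic N) : NonQuasianalytic (newSeq N a) := by
  have ha0 : 0 < a := by linarith
  have hpos : ∀ k, 0 < newSeq N a k := fun k => by
    have := halfSeq_pos N a ha0 hp k
    simp only [newSeq]; positivity
  have hev : ∀ j, newSeq N a (2 * j) / newSeq N a (2 * j + 1) ≤ N j / N (j + 1) := by
    intro j
    have h0 := hp j
    have h1 := hp (j + 1)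
    rw [div_le_div_iff₀ (hpos _) h1]
    simp only [newSeq, halfSeq, mseq]
    rw [show (2 * j + 1) / 2 = j by omega, show (2 * j + 1 + 1) / 2 = j + 1 by omega,
      show 2 * j / 2 = j by omega, Nat.factorial_succ (2 * j), Nat.factorial_succ j]
    push_cast
    have hf : (0 : ℝ) < Nat.factorial j := by positivity
    have hf2 : (0 : ℝ) < Nat.factorial (2 * j) := by positivity
    have hx : (j + 1 : ℝ) ≤ (2 * j + 1) * a := by
      nlinarith [Nat.cast_nonneg (α := ℝ) j]
    have hj : (0 : ℝ) < j + 1 := by positivity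
    field_simp
    rw [pow_succ]
    nlinarith [pow_pos ha0 (2 * j)]
  have hod : ∀ j, newSeq N a (2 * j + 1) / newSeq N a (2 * j + 1 + 1) ≤ N j / N (j + 1) := by
    intro j
    have h0 := hp j
    have h1 := hp (j + 1)
    rw [div_le_div_iff₀ (hpos _) h1]
    simp only [newSeq, halfSeq, mseq]
    rw [show (2 * j + 1) / 2 = j by omega, show (2 * j + 1 + 1) / 2 = j + 1 by omega,
      show (2 * j + 1 + 1 + 1) / 2 = j + 1 by omega, Nat.factorial_succ (2 * j + 1),
      Nat.factorial_succ j]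
    push_cast
    have hf : (0 : ℝ) < Nat.factorial j := by positivity
    have hf2 : (0 : ℝ) < Nat.factorial (2 * j + 1) := by positivity
    have hx : (j + 1 : ℝ) ≤ (2 * j + 1 + 1) * a := by
      nlinarith [Nat.cast_nonneg (α := ℝ) j]
    have hj : (0 : ℝ) < j + 1 := by positivity
    field_simp
    rw [pow_succ a (2 * j + 1)]
    nlinarith [pow_pos ha0 (2 * j + 1)]
  have h1 : Summable fun j => newSeq N a (2 * j) / newSeq N a (2 * j + 1) :=
    Summable.of_nonneg_of_le (fun j => (div_pos (hpos _) (hpos _)).le) hev hs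
  have h2 : Summable fun j => newSeq N a (2 * j + 1) / newSeq N a (2 * j + 1 + 1) :=
    Summable.of_nonneg_of_le (fun j => (div_pos (hpos _) (hpos _)).le) hod hs
  exact (HasSum.even_add_odd (f := fun k => newSeq N a k / newSeq N a (k + 1))
    h1.hasSum h2.hasSum).summable

/-- for a quasianalytic intersectable weight sequence `M` of moderate
growth, every `N ∈ L(M)` admits `N' ∈ L(M)` with `mg (N', N) < ∞`. -/
theorem statement19 (M : ℕ → ℝ) (hM : IsWeightSeq M) (hq : Quasianalytic M)
    (hint : Intersectable M) (hmg : ModerateGrowth M) :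
    ∀ N ∈ LM M, ∃ N' ∈ LM M, MgFinite N' N := by
  intro N hN
  obtain ⟨⟨hN0, hNp, hN1, hNl, -⟩, hNs, hNM, hnl⟩ := hN
  obtain ⟨hM0, hMp, hM1, hMl, hMt⟩ := hM
  obtain ⟨C, hC, hMC⟩ := hmg
  set a := max C 1 with ha_def
  have ha1 : 1 ≤ a := le_max_right _ _
  have ha0 : 0 < a := by linarith
  have hCa : C ≤ a := le_max_left _ _
  have hpos : ∀ k, 0 < newSeq N a k := fun k => by
    have := halfSeq_pos N a ha0 hNp k
    simp only [newSeq]; positivity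
  have hge : ∀ k, M k ≤ newSeq N a k := by
    intro k
    have h := hMC (k / 2) ((k + 1) / 2)
    rw [show k / 2 + (k + 1) / 2 = k by omega] at h
    rw [newSeq_eq]
    have hch : (1 : ℝ) ≤ (Nat.choose k (k / 2) : ℝ) := by
      exact_mod_cast Nat.choose_pos (Nat.div_le_self k 2)
    have hp1 := hMp (k / 2)
    have hp2 := hMp ((k + 1) / 2)
    have hMN : M (k / 2) * M ((k + 1) / 2) ≤ N (k / 2) * N ((k + 1) / 2) :=
      mul_le_mul (hNM _) (hNM _) hp2.le (hNp _).le
    have hpow : C ^ k ≤ a ^ k * (Nat.choose k (k / 2) : ℝ) :=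
      (pow_le_pow_left₀ hC.le hCa k).trans (le_mul_of_one_le_right (by positivity) hch)
    calc M k ≤ C ^ k * (M (k / 2) * M ((k + 1) / 2)) := by rw [← mul_assoc]; exact h
      _ ≤ _ := mul_le_mul hpow hMN (by positivity) (by positivity)
  refine ⟨newSeq N a, ⟨⟨?_, hpos, ?_, newSeq_logConvex N a ha0 hNp hnl, ?_⟩,
    newSeq_summable N a ha1 hNp hNs, hge, ?_⟩, ?_⟩
  · simp [newSeq_eq, hN0]
  · exact hM1.trans (hge 1)
  · refine tendsto_atTop_mono (fun k => ?_) hMt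
    exact Real.rpow_le_rpow (hMp k).le (hge k) (by positivity)
  · rw [mseq_newSeq]
    exact halfSeq_logConvex N a ha0 hNp hnl
  · refine ⟨2 * a, ?_⟩
    rintro x ⟨j, k, hjk, rfl⟩
    have hj := hNp j
    have hk := hNp k
    have hb : newSeq N a (j + k) / (N j * N k) ≤ (2 * a) ^ (j + k) := by
      rw [div_le_iff₀ (by positivity), newSeq_eq, mul_pow, mul_comm ((2 : ℝ) ^ (j + k))]
      have hch : (Nat.choose (j + k) ((j + k) / 2) : ℝ) ≤ 2 ^ (j + k) := by
        exact_mod_cast Nat.choose_le_two_pow (j + k) ((j + k) / 2)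
      have h1 := hNp ((j + k) / 2)
      have h2 := hNp ((j + k + 1) / 2)
      exact mul_le_mul (mul_le_mul_of_nonneg_left hch (by positivity))
        (aux_half N hNp hNl j k) (by positivity) (by positivity)
    calc (newSeq N a (j + k) / (N j * N k)) ^ (1 / (j + k : ℝ))
        ≤ ((2 * a) ^ (j + k)) ^ (1 / (j + k : ℝ)) :=
          Real.rpow_le_rpow (div_pos (hpos _) (by positivity)).le hb (by positivity)
      _ = 2 * a := by
          have := Real.pow_rpow_inv_natCast (x := 2 * a) (n := j + k) (by positivity) (by omega)
          rw [one_div]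
          exact_mod_cast this
end
end
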